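/- Let a > 0 be a real number, let n ≥ 2 be an integer, and let g : [0,a] → ℝ be a nonnegative concave function with g(0) = 1. Let b ≥ a be a real number such that ∫_0^a g(x)^{n−1} dx = ∫_0^b (1 − x/b)^{n−1} dx. Then ∫_0^a x·g(x)^{n−1} dx ≤ ∫_0^b x·(1 − x/b)^{n−1} dx. -/

import Mathlib

/-!
Write `l x = 1 - x / b` and `m = n - 1`. Since `g - l` is concave on `[0, a]` and vanishes at `0`, it
changes sign at most once, from `+` to `-`: there is `c ∈ [0, a]` with `l ≤ g` before `c` and `g ≤ l`
after it (`exists_crossing`). Extending `g` by zero to `[0, b]`, this gives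
`(x - c) * (g x ^ m - l x ^ m) ≤ 0` on all of `[0, b]`; integrating, and using that `g ^ m` and `l ^ m`
have the same integral, the multiple of `c` cancels and the comparison of first moments remains.
-/

open MeasureTheory intervalIntegral

/-- A concave function on `[0, a]` starting at height `1` crosses the line `1 - x / b` at most once,
downwards. -/
lemma exists_crossing {a b : ℝ} (ha : 0 < a) {g : ℝ → ℝ}
    (hconc : ConcaveOn ℝ (Set.Icc 0 a) g) (hg0 : g 0 = 1) :
    ∃ c ∈ Set.Icc (0 : ℝ) a, ∀ x ∈ Set.Icc (0 : ℝ) a,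
      (x < c → 1 - x / b ≤ g x) ∧ (c < x → g x ≤ 1 - x / b) := by
  set S : Set ℝ := {y | y ∈ Set.Icc (0 : ℝ) a ∧ 1 - y / b ≤ g y} with hS
  have h0 : (0 : ℝ) ∈ S := ⟨⟨le_rfl, ha.le⟩, by simp [hg0]⟩
  have hbdd : BddAbove S := ⟨a, fun y hy => hy.1.2⟩
  refine ⟨sSup S, ⟨le_csSup hbdd h0, csSup_le ⟨0, h0⟩ fun y hy => hy.1.2⟩, fun x hx => ⟨?_, ?_⟩⟩
  · intro hxc
    obtain ⟨y, hy, hxy⟩ := exists_lt_of_lt_csSup ⟨0, h0⟩ hxc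
    have hy0 : 0 < y := hx.1.trans_lt hxy
    -- `x` is the convex combination of `0` and `y` with weight `x / y` on `y`.
    have hc := hconc.2 h0.1 hy.1
      (sub_nonneg.2 ((div_le_one hy0).2 hxy.le)) (div_nonneg hx.1 hy0.le) (sub_add_cancel _ _)
    simp only [smul_eq_mul, mul_zero, zero_add, hg0, mul_one, div_mul_cancel₀ x hy0.ne'] at hc
    have h1 := mul_le_mul_of_nonneg_left hy.2 (div_nonneg hx.1 hy0.le)
    have h2 : x / y * (1 - y / b) = x / y - x / b := by
      rw [mul_sub, mul_one, div_mul_div_cancel₀ hy0.ne']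
    linarith
  · intro hcx
    by_contra hlt
    exact absurd (le_csSup hbdd (show x ∈ S from ⟨hx, (not_le.1 hlt).le⟩)) (not_le.2 hcx)

/-- The barycenter shift inequality (3.4) in the proof of Lemma 3.4: for `a > 0`,
an integer `n ≥ 2`, and a nonnegative concave function `g` on `[0, a]` with
`g 0 = 1`, if `b ≥ a` satisfies `∫_0^a g(x)^{n−1} dx = ∫_0^b (1 − x/b)^{n−1} dx`,
then `∫_0^a x·g(x)^{n−1} dx ≤ ∫_0^b x·(1 − x/b)^{n−1} dx`. -/
theorem stmt_9 (a b : ℝ) (ha : 0 < a) (hab : a ≤ b) (n : ℕ) (hn : 2 ≤ n)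
    (g : ℝ → ℝ)
    (hconc : ConcaveOn ℝ (Set.Icc 0 a) g)
    (hnonneg : ∀ x ∈ Set.Icc (0 : ℝ) a, 0 ≤ g x)
    (hg0 : g 0 = 1)
    (hintegral : (∫ x in (0 : ℝ)..a, g x ^ (n - 1)) =
      ∫ x in (0 : ℝ)..b, (1 - x / b) ^ (n - 1)) :
    (∫ x in (0 : ℝ)..a, x * g x ^ (n - 1)) ≤
      ∫ x in (0 : ℝ)..b, x * (1 - x / b) ^ (n - 1) := by
  obtain ⟨c, hc, hcross⟩ := exists_crossing (b := b) ha hconc hg0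
  have hb : 0 < b := ha.trans_le hab
  have hl : ∀ x ≤ b, 0 ≤ 1 - x / b := fun x hx => sub_nonneg.2 ((div_le_one hb).2 hx)
  generalize n - 1 = m at *
  have hlc : Continuous fun x : ℝ => (1 - x / b) ^ m := by fun_prop
  have hxlc : Continuous fun x : ℝ => x * (1 - x / b) ^ m := by fun_prop
  -- A non-integrable `g ^ m` would have integral `0`, but the cone profile has positive integral.
  have hgi : IntervalIntegrable (fun x => g x ^ m) volume 0 a := by
    by_contra hni
    rw [integral_undef hni] at hintegral
    have hpos : 0 < ∫ x in (0 : ℝ)..b, (1 - x / b) ^ m :=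
      intervalIntegral_pos_of_pos_on (hlc.intervalIntegrable _ _)
        (fun x hx => pow_pos (sub_pos.2 ((div_lt_one hb).2 hx.2)) m) hb
    exact hpos.ne hintegral
  have hxgi : IntervalIntegrable (fun x => x * g x ^ m) volume 0 a :=
    hgi.continuousOn_mul continuousOn_id
  have h1 : (∫ x in (0 : ℝ)..a, (x * g x ^ m + c * (1 - x / b) ^ m)) ≤
      ∫ x in (0 : ℝ)..a, (c * g x ^ m + x * (1 - x / b) ^ m) := by
    refine integral_mono_on ha.le (hxgi.add ((hlc.intervalIntegrable _ _).const_mul c))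
      ((hgi.const_mul c).add (hxlc.intervalIntegrable _ _)) fun x hx => ?_
    rcases lt_trichotomy x c with h | h | h
    · have := pow_le_pow_left₀ (hl x (hx.2.trans hab)) ((hcross x hx).1 h) m
      nlinarith
    · rw [h]
    · have := pow_le_pow_left₀ (hnonneg x hx) ((hcross x hx).2 h) m
      nlinarith
  have h2 : (∫ x in a..b, c * (1 - x / b) ^ m) ≤ ∫ x in a..b, x * (1 - x / b) ^ m :=
    integral_mono_on hab ((hlc.intervalIntegrable _ _).const_mul c) (hxlc.intervalIntegrable _ _)
      fun x hx => mul_le_mul_of_nonneg_right (hc.2.trans hx.1) (pow_nonneg (hl x hx.2) m)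
  rw [integral_add hxgi ((hlc.intervalIntegrable _ _).const_mul c),
    integral_add (hgi.const_mul c) (hxlc.intervalIntegrable _ _),
    intervalIntegral.integral_const_mul, intervalIntegral.integral_const_mul, hintegral] at h1
  rw [intervalIntegral.integral_const_mul] at h2
  rw [← integral_add_adjacent_intervals (hlc.intervalIntegrable 0 a)
    (hlc.intervalIntegrable a b)] at h1
  rw [← integral_add_adjacent_intervals (hxlc.intervalIntegrable 0 a)
    (hxlc.intervalIntegrable a b)]
  linarith
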